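/- Let n > 2 and let X ⊂ ℂⁿ be an algebraic curve. Then there exist a real number r > 0 and a surjective linear map π : ℂⁿ → ℂ² such that the restriction of π to X is a proper map, and the restriction of π to X \ π⁻¹(B(0,r)) is a bi-Lipschitz embedding into ℂ² \ B(0,r); that is, there exists C ≥ 1 such that C⁻¹·‖x − y‖ ≤ ‖π(x) − π(y)‖ ≤ C·‖x − y‖ for all x, y ∈ X \ π⁻¹(B(0,r)). -/

import Mathlib

open Set Metric

noncomputable section

/-- An algebraic set in ℂᵏ: the common zero set of a finite family of polynomials. -/
def IsAlgebraicSet {k : ℕ} (X : Set (EuclideanSpace ℂ (Fin k))) : Prop :=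
  ∃ S : Finset (MvPolynomial (Fin k) ℂ),
    X = {x | ∀ p ∈ S, MvPolynomial.eval (fun i => x i) p = 0}

/-- An irreducible algebraic curve: an infinite algebraic set all of whose proper algebraic
subsets are finite. -/
def IsIrreducibleAlgebraicCurve {k : ℕ} (X : Set (EuclideanSpace ℂ (Fin k))) : Prop :=
  IsAlgebraicSet X ∧ X.Infinite ∧ ∀ Y, IsAlgebraicSet Y → Y ⊂ X → Y.Finite

/-- An algebraic curve: a finite union of irreducible algebraic curves. -/
def IsAlgebraicCurve {k : ℕ} (X : Set (EuclideanSpace ℂ (Fin k))) : Prop :=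
  ∃ F : Finset (Set (EuclideanSpace ℂ (Fin k))),
    (∀ C ∈ F, IsIrreducibleAlgebraicCurve C) ∧ X = ⋃ C ∈ F, C

/-- `f` maps `X` bijectively onto `Y` and is bi-Lipschitz (outer metric). -/
def IsBiLipschitzOn {E F : Type*} [NormedAddCommGroup E] [NormedAddCommGroup F]
    (f : E → F) (X : Set E) (Y : Set F) : Prop :=
  Set.BijOn f X Y ∧ ∃ C : ℝ, 1 ≤ C ∧ ∀ x ∈ X, ∀ x' ∈ X,
    C⁻¹ * ‖x - x'‖ ≤ ‖f x - f x'‖ ∧ ‖f x - f x'‖ ≤ C * ‖x - x'‖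

/-- `X` and `Y` are bi-Lipschitz equivalent (with respect to the outer Euclidean metric). -/
def BiLipschitzEquiv {E F : Type*} [NormedAddCommGroup E] [NormedAddCommGroup F]
    (X : Set E) (Y : Set F) : Prop :=
  ∃ f : E → F, IsBiLipschitzOn f X Y

/-- `X` and `Y` are bi-Lipschitz equivalent at infinity. -/
def BiLipschitzEquivAtInfinity {E F : Type*} [NormedAddCommGroup E] [NormedAddCommGroup F]
    (X : Set E) (Y : Set F) : Prop :=
  ∃ (K₁ : Set E) (K₂ : Set F), IsCompact K₁ ∧ IsCompact K₂ ∧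
    BiLipschitzEquiv (X \ K₁) (Y \ K₂)

/-- The germs `(X, p)` and `(Y, q)` are bi-Lipschitz equivalent. -/
def GermBiLipschitzEquiv {E F : Type*} [NormedAddCommGroup E] [NormedAddCommGroup F]
    (X : Set E) (p : E) (Y : Set F) (q : F) : Prop :=
  ∃ (U : Set E) (V : Set F), IsOpen U ∧ IsOpen V ∧ p ∈ U ∧ q ∈ V ∧
    ∃ f : E → F, IsBiLipschitzOn f (X ∩ U) (Y ∩ V) ∧ f p = q

/-- `γ` maps `D` homeomorphically onto `S`. -/
def MapsHomeomorphicallyOnto {E : Type*} [TopologicalSpace E]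
    (γ : ℂ → E) (D : Set ℂ) (S : Set E) : Prop :=
  Set.InjOn γ D ∧ γ '' D = S ∧ ContinuousOn γ D ∧
    ∃ σ : E → ℂ, ContinuousOn σ S ∧ ∀ z ∈ D, σ (γ z) = z

/-- A regular point of a curve `X ⊂ ℂᵏ`: some neighborhood of `p` in `X` is the
homeomorphic image of an injective holomorphic map with nowhere-vanishing derivative. -/
def IsRegularPoint {k : ℕ} (X : Set (EuclideanSpace ℂ (Fin k)))
    (p : EuclideanSpace ℂ (Fin k)) : Prop :=
  ∃ (U : Set (EuclideanSpace ℂ (Fin k))) (D : Set ℂ) (γ : ℂ → EuclideanSpace ℂ (Fin k)),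
    IsOpen U ∧ p ∈ U ∧ IsOpen D ∧ DifferentiableOn ℂ γ D ∧ Set.InjOn γ D ∧
    (∀ z ∈ D, deriv γ z ≠ 0) ∧ MapsHomeomorphicallyOnto γ D (X ∩ U)

/-- The set of singular points of `X`. -/
def SingularSet {k : ℕ} (X : Set (EuclideanSpace ℂ (Fin k))) :
    Set (EuclideanSpace ℂ (Fin k)) :=
  {p ∈ X | ¬ IsRegularPoint X p}

/-- `B` is a (smooth) branch through `q` with tangent vector `v`. -/
def IsBranchAt (B : Set (EuclideanSpace ℂ (Fin 2))) (q v : EuclideanSpace ℂ (Fin 2)) : Prop :=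
  ∃ (D : Set ℂ) (γ : ℂ → EuclideanSpace ℂ (Fin 2)) (z₀ : ℂ),
    IsOpen D ∧ z₀ ∈ D ∧ DifferentiableOn ℂ γ D ∧ Set.InjOn γ D ∧
    (∀ z ∈ D, deriv γ z ≠ 0) ∧ MapsHomeomorphicallyOnto γ D B ∧
    γ z₀ = q ∧ deriv γ z₀ = v

/-- `q` is a node of the plane curve `Y`: near `q`, `Y` is the union of two smooth branches
meeting only at `q` with distinct tangent lines. -/
def IsNode (Y : Set (EuclideanSpace ℂ (Fin 2))) (q : EuclideanSpace ℂ (Fin 2)) : Prop :=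
  q ∈ Y ∧ ∃ (U B₁ B₂ : Set (EuclideanSpace ℂ (Fin 2))) (v₁ v₂ : EuclideanSpace ℂ (Fin 2)),
    IsOpen U ∧ q ∈ U ∧ Y ∩ U = B₁ ∪ B₂ ∧ B₁ ∩ B₂ = {q} ∧
    IsBranchAt B₁ q v₁ ∧ IsBranchAt B₂ q v₂ ∧ ∀ c : ℂ, v₂ ≠ c • v₁

/-- The set of points of `ℂ²` having more than one `π`-preimage in `X`. -/
def MultipleSet {n : ℕ} (π : EuclideanSpace ℂ (Fin n) →ₗ[ℂ] EuclideanSpace ℂ (Fin 2))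
    (X : Set (EuclideanSpace ℂ (Fin n))) : Set (EuclideanSpace ℂ (Fin 2)) :=
  {q | ∃ x ∈ X, ∃ y ∈ X, x ≠ y ∧ π x = q ∧ π y = q}

/-- `π` is a generic plane projection for the algebraic curve `X ⊂ ℂⁿ`. -/
def IsGenericPlaneProjection {n : ℕ}
    (π : EuclideanSpace ℂ (Fin n) →ₗ[ℂ] EuclideanSpace ℂ (Fin 2))
    (X : Set (EuclideanSpace ℂ (Fin n))) : Prop :=
  Function.Surjective π ∧
  (∀ K : Set (EuclideanSpace ℂ (Fin 2)), IsCompact K → IsCompact (X ∩ ⇑π ⁻¹' K)) ∧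
  (MultipleSet π X).Finite ∧
  (∀ q ∈ MultipleSet π X, ∃ x y, x ≠ y ∧ {z ∈ X | π z = q} = {x, y} ∧
    IsRegularPoint X x ∧ IsRegularPoint X y) ∧
  (∀ q ∈ MultipleSet π X, IsNode (⇑π '' X) q) ∧
  (∀ p ∈ X, π p ∉ MultipleSet π X →
    ∃ (U : Set (EuclideanSpace ℂ (Fin n))) (V : Set (EuclideanSpace ℂ (Fin 2))),
      IsOpen U ∧ IsOpen V ∧ p ∈ U ∧ π p ∈ V ∧
      IsBiLipschitzOn (⇑π) (X ∩ U) ((⇑π '' X) ∩ V))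

/-- The complex projective plane `ℂP²`. -/
abbrev ProjPlane : Type := Projectivization ℂ (Fin 3 → ℂ)

instance : TopologicalSpace ProjPlane :=
  inferInstanceAs (TopologicalSpace (Quotient (projectivizationSetoid ℂ (Fin 3 → ℂ))))

/-- The embedding `ℂ² → ℂP²`, `(x, y) ↦ (x : y : 1)`. -/
def toProj (p : EuclideanSpace ℂ (Fin 2)) : ProjPlane :=
  Projectivization.mk ℂ ![p 0, p 1, 1] (fun h => by simpa using congrFun h 2)

/-- The line at infinity in `ℂP²`. -/
def lineAtInfinity : Set ProjPlane := {P | P.rep 2 = 0}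

/-- The projective closure of a plane curve `X ⊂ ℂ²`: the topological closure in `ℂP²`. -/
def projClosure (X : Set (EuclideanSpace ℂ (Fin 2))) : Set ProjPlane :=
  closure (toProj '' X)

/-- The germs `(A, p)` and `(B, q)` are (ambient) topologically equivalent. -/
def GermTopEquiv {T : Type*} [TopologicalSpace T] (A : Set T) (p : T) (B : Set T) (q : T) :
    Prop :=
  ∃ (U V : Set T) (φ ψ : T → T),
    IsOpen U ∧ IsOpen V ∧ p ∈ U ∧ q ∈ V ∧
    ContinuousOn φ U ∧ ContinuousOn ψ V ∧ Set.MapsTo φ U V ∧ Set.MapsTo ψ V U ∧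
    (∀ x ∈ U, ψ (φ x) = x) ∧ (∀ y ∈ V, φ (ψ y) = y) ∧
    φ p = q ∧ φ '' (A ∩ U) = B ∩ V

/-- The `i`-th standard affine chart of `ℂP²`. -/
def chart (i : Fin 3) (P : ProjPlane) : EuclideanSpace ℂ (Fin 2) :=
  (EuclideanSpace.equiv (Fin 2) ℂ).symm fun j => P.rep (i.succAbove j) / P.rep i

/-- A regular point of a curve `C ⊂ ℂP²`: read in a standard affine chart, some neighborhood
of `p` in `C` is the homeomorphic image of an injective holomorphic map with
nowhere-vanishing derivative. -/
def IsRegularPointProj (C : Set ProjPlane) (p : ProjPlane) : Prop :=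
  ∃ i : Fin 3, p.rep i ≠ 0 ∧
    ∃ W : Set ProjPlane, IsOpen W ∧ p ∈ W ∧ W ⊆ {P : ProjPlane | P.rep i ≠ 0} ∧
      ∃ (D : Set ℂ) (γ : ℂ → EuclideanSpace ℂ (Fin 2)),
        IsOpen D ∧ DifferentiableOn ℂ γ D ∧ Set.InjOn γ D ∧ (∀ z ∈ D, deriv γ z ≠ 0) ∧
        MapsHomeomorphicallyOnto γ D (chart i '' (C ∩ W))

/-- The set of singular points of a curve `C ⊂ ℂP²`. -/
def SingularSetProj (C : Set ProjPlane) : Set ProjPlane :=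
  {p ∈ C | ¬ IsRegularPointProj C p}

/-- `C` is an irreducible component of the algebraic curve `X`. -/
def IsIrreducibleComponent {k : ℕ} (C X : Set (EuclideanSpace ℂ (Fin k))) : Prop :=
  IsIrreducibleAlgebraicCurve C ∧ C ⊆ X ∧
    ∀ C', IsIrreducibleAlgebraicCurve C' → C' ⊆ X → C ⊆ C' → C' = C

/-- The degree of an algebraic plane curve: the minimal degree of a nonzero polynomial
vanishing identically on it. -/
def curveDegree (X : Set (EuclideanSpace ℂ (Fin 2))) : ℕ :=
  sInf {d | ∃ P : MvPolynomial (Fin 2) ℂ, P ≠ 0 ∧ P.totalDegree = d ∧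
    ∀ x ∈ X, MvPolynomial.eval (fun i => x i) P = 0}

/-- `f` is algebraic over the parameter `τ`. -/
def AlgOn {ι : Type*} (τ f : ι → ℂ) : Prop :=
  ∃ Q : Polynomial (Polynomial ℂ), Q ≠ 0 ∧ ∀ i, Q.evalEval (τ i) (f i) = 0

def parHom {ι : Type*} (τ : ι → ℂ) : Polynomial ℂ →+* (ι → ℂ) :=
  RingHom.pi (fun i => Polynomial.evalRingHom (τ i))

theorem algOn_iff {ι : Type*} (τ f : ι → ℂ) :
    AlgOn τ f ↔ @IsAlgebraic (Polynomial ℂ) (ι → ℂ) _ _ (parHom τ).toAlgebra f := by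
  let := (parHom τ).toAlgebra
  have key : ∀ (Q : Polynomial (Polynomial ℂ)) i,
      (Polynomial.aeval f Q) i = Q.evalEval (τ i) (f i) := by
    intro Q i
    induction Q using Polynomial.induction_on' with
    | add p q hp hq => simp [hp, hq, Polynomial.evalEval_add]
    | monomial n a =>
      simp only [Polynomial.aeval_monomial, Pi.mul_apply, Pi.pow_apply, Polynomial.evalEval,
        Polynomial.eval_monomial, Polynomial.eval_mul, Polynomial.eval_pow, Polynomial.eval_C]
      rfl
  constructor
  · rintro ⟨Q, hQ, h⟩
    exact ⟨Q, hQ, funext fun i => by rw [key, h]; rfl⟩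
  · rintro ⟨Q, hQ, h⟩
    exact ⟨Q, hQ, fun i => by rw [← key, h]; rfl⟩

theorem AlgOn.sub {ι : Type*} {τ f g : ι → ℂ} (hf : AlgOn τ f) (hg : AlgOn τ g) :
    AlgOn τ (fun i => f i - g i) := by
  let := (parHom τ).toAlgebra
  rw [algOn_iff] at *
  exact IsAlgebraic.sub hf hg

theorem AlgOn.mul {ι : Type*} {τ f g : ι → ℂ} (hf : AlgOn τ f) (hg : AlgOn τ g) :
    AlgOn τ (fun i => f i * g i) := by
  let := (parHom τ).toAlgebra
  rw [algOn_iff] at *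
  exact IsAlgebraic.mul hf hg

theorem AlgOn.inv {ι : Type*} {τ f : ι → ℂ} (hf : AlgOn τ f) (h0 : ∀ i, f i ≠ 0) :
    AlgOn τ (fun i => (f i)⁻¹) := by
  let := (parHom τ).toAlgebra
  rw [algOn_iff] at *
  let : Invertible f := ⟨fun i => (f i)⁻¹, funext fun i => by simp [h0],
    funext fun i => by simp [h0]⟩
  exact IsAlgebraic.invOf (x := f) hf

theorem AlgOn.self {ι : Type*} (τ : ι → ℂ) : AlgOn τ τ :=
  ⟨Polynomial.X - Polynomial.C Polynomial.X, Polynomial.X_sub_C_ne_zero _, fun i => by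
    simp [Polynomial.evalEval]⟩

theorem AlgOn.comp {ι κ : Type*} {τ f : ι → ℂ} (hf : AlgOn τ f) (φ : κ → ι) :
    AlgOn (fun i => τ (φ i)) (fun i => f (φ i)) := by
  obtain ⟨Q, h, h'⟩ := hf
  exact ⟨Q, h, fun i => h' _⟩

theorem AlgOn.div {ι : Type*} {τ f g : ι → ℂ} (hf : AlgOn τ f) (hg : AlgOn τ g)
    (h0 : ∀ i, g i ≠ 0) : AlgOn τ (fun i => f i / g i) := by
  simp only [div_eq_mul_inv]
  exact hf.mul (hg.inv h0)

/-- Limits of an algebraic function at infinity lie in a finite set. -/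
theorem limits_finite (Q : Polynomial (Polynomial ℂ)) (hQ : Q ≠ 0) :
    ∃ S : Finset ℂ, ∀ B ε : ℝ, 0 < ε → ∃ R : ℝ, 0 < R ∧ ∀ t w : ℂ, R < ‖t‖ → ‖w‖ ≤ B →
      Q.evalEval t w = 0 → ∃ c ∈ S, ‖w - c‖ < ε := by
  classical
  set q := Polynomial.Bivariate.swap Q with hq
  have hq0 : q ≠ 0 := by simpa [hq] using hQ
  have hev : ∀ t w : ℂ, Q.evalEval t w = q.evalEval w t := by
    intro t w
    have := Polynomial.Bivariate.aevalAeval_swap (R := ℂ) (A := ℂ) w t Q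
    simpa [Polynomial.aevalAeval, Polynomial.evalEval, Polynomial.aeval_def, Polynomial.eval₂_eq_eval_map, hq] using this.symm
  set d := q.natDegree with hd
  let G : ℂ → ℂ → ℂ := fun z w => ∑ k ∈ Finset.range (d+1), (q.coeff k).eval w * z ^ (d - k)
  have hG : Continuous (fun p : ℂ × ℂ => G p.1 p.2) := by
    refine continuous_finsetSum _ fun k _ => ?_
    exact ((q.coeff k).continuous.comp continuous_snd).mul (continuous_fst.pow _)
  have hG0 : ∀ w, G 0 w = (q.leadingCoeff).eval w := by
    intro w
    simp only [G]
    rw [Finset.sum_range_succ, Finset.sum_eq_zero]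
    · simp [hd]
    · intro k hk
      have : d - k ≠ 0 := by have := Finset.mem_range.mp hk; omega
      simp [this]
  have hGt : ∀ t w, t ≠ 0 → q.evalEval w t = t ^ d * G t⁻¹ w := by
    intro t w ht
    simp only [G, Polynomial.evalEval]
    rw [Polynomial.eval_eq_sum_range (p := q), Polynomial.eval_finsetSum, Finset.mul_sum]
    refine Finset.sum_congr rfl fun k hk => ?_
    have hk : k ≤ d := by have := Finset.mem_range.mp hk; omega
    simp only [Polynomial.eval_mul, Polynomial.eval_pow, Polynomial.eval_C]
    have : t ^ d = t ^ k * t ^ (d - k) := by rw [← pow_add]; congr 1; omega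
    rw [this, inv_pow]
    field_simp
  refine ⟨q.leadingCoeff.roots.toFinset, fun B ε hε => ?_⟩
  set S := q.leadingCoeff.roots.toFinset
  let K : Set ℂ := closedBall 0 B ∩ {w | ∀ c ∈ S, ε ≤ ‖w - c‖}
  have hK : IsCompact K := by
    refine (isCompact_closedBall 0 B).inter_right ?_
    have : {w : ℂ | ∀ c ∈ S, ε ≤ ‖w - c‖} = ⋂ c ∈ S, {w | ε ≤ ‖w - c‖} := by ext; simp
    rw [this]
    refine isClosed_biInter fun c _ => ?_
    exact isClosed_le continuous_const (by fun_prop)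
  have hev2 : ∀ᶠ z in nhds (0:ℂ), ∀ w ∈ K, G z w ≠ 0 := by
    refine hK.eventually_forall_of_forall_eventually fun w hw => ?_
    refine (hG.continuousAt).eventually_ne ?_
    simp only [hG0]
    intro h
    have hmem : w ∈ S := by
      simp only [S, Multiset.mem_toFinset]
      rw [Polynomial.mem_roots (by simpa using hq0)]
      exact h
    have := hw.2 w hmem
    simp at this
    linarith
  obtain ⟨δ, hδ, hδ'⟩ := Metric.eventually_nhds_iff.mp hev2
  refine ⟨δ⁻¹, by positivity, fun t w ht hw hQ0 => ?_⟩
  by_contra hcon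
  push Not at hcon
  have ht0 : t ≠ 0 := by
    rintro rfl
    simp at ht
    linarith
  have hz : dist t⁻¹ 0 < δ := by
    rw [dist_zero_right, norm_inv]
    exact inv_lt_of_inv_lt₀ hδ ht
  have h1 := hδ' hz w ⟨by simpa using hw, hcon⟩
  rw [hev, hGt t w ht0] at hQ0
  exact (mul_ne_zero (pow_ne_zero _ ht0) h1) hQ0

theorem dirs {n : ℕ} {D : Type*} (v : D → Fin n → ℂ) (τ : Fin n → D → ℂ)
    (h : ∀ i j, AlgOn (fun d : {d // v d j ≠ 0} => τ j d) (fun d => v d i / v d j)) :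
    ∃ L : Finset (Fin n → ℂ), (∀ w ∈ L, w ≠ 0) ∧
      ∀ a : Fin n → ℂ, (∀ w ∈ L, ∑ i, a i * w i ≠ 0) → ∃ C R : ℝ, 0 < C ∧ 0 < R ∧
        ∀ d j, (∀ i, ‖v d i‖ ≤ ‖v d j‖) → R < ‖τ j d‖ →
          ‖v d j‖ ≤ C * ‖∑ i, a i * v d i‖ := by
  classical
  choose Q hQ0 hQ using h
  choose S hS using fun i j => limits_finite (Q i j) (hQ0 i j)
  refine ⟨Finset.univ.biUnion fun j =>
    (Fintype.piFinset fun i => S i j).image fun c => Function.update c j 1, ?_, ?_⟩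
  · intro w hw
    simp only [Finset.mem_biUnion, Finset.mem_image] at hw
    obtain ⟨j, -, c, -, rfl⟩ := hw
    intro h0
    have := congrFun h0 j
    simp at this
  intro a ha
  set L := Finset.univ.biUnion fun j =>
    (Fintype.piFinset fun i => S i j).image fun c => Function.update c j (1:ℂ) with hL
  set C0 : ℝ := ∑ w ∈ L, ‖∑ i, a i * w i‖⁻¹ + 1 with hC0
  have hC0pos : 0 < C0 := by positivity
  have hC0' : ∀ w ∈ L, 1 ≤ C0 * ‖∑ i, a i * w i‖ := by
    intro w hw
    have hpos : 0 < ‖∑ i, a i * w i‖ := norm_pos_iff.mpr (ha w hw)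
    have : ‖∑ i, a i * w i‖⁻¹ ≤ C0 := by
      have := Finset.single_le_sum (f := fun w : Fin n → ℂ => ‖∑ i, a i * w i‖⁻¹)
        (fun w _ => by positivity) hw
      linarith
    rwa [inv_le_iff_one_le_mul₀ hpos] at this
  set A : ℝ := ∑ i, ‖a i‖ + 1 with hA
  have hApos : 0 < A := by positivity
  set ε : ℝ := 1 / (2 * C0 * A) with hε
  have hεpos : 0 < ε := by positivity
  choose R hR0 hR using fun i j => hS i j 1 ε hεpos
  refine ⟨2 * C0, ∑ i, ∑ j, R i j + 1, by positivity, ?_, ?_⟩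
  · have : 0 ≤ ∑ i, ∑ j, R i j := Finset.sum_nonneg fun i _ => Finset.sum_nonneg fun j _ => (hR0 i j).le
    linarith
  intro d j hmax hτ
  by_cases hv : v d j = 0
  · rw [hv, norm_zero]; positivity
  have hτ' : ∀ i, R i j < ‖τ j d‖ := by
    intro i
    have h1 := Finset.single_le_sum (f := fun j => R i j) (fun j _ => (hR0 i j).le) (Finset.mem_univ j)
    have h2 := Finset.single_le_sum (f := fun i => ∑ j, R i j)
      (fun i _ => Finset.sum_nonneg fun j _ => (hR0 i j).le) (Finset.mem_univ i)
    linarith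
  have hvp : 0 < ‖v d j‖ := norm_pos_iff.mpr hv
  have hex : ∀ i, ∃ c ∈ S i j, ‖v d i / v d j - c‖ < ε := by
    intro i
    refine hR i j (τ j d) _ (hτ' i) ?_ (hQ i j ⟨d, hv⟩)
    rw [norm_div]
    exact div_le_one_of_le₀ (hmax i) (norm_nonneg _)
  choose c hcS hc using hex
  have hw : Function.update c j (1:ℂ) ∈ L := by
    rw [hL]
    simp only [Finset.mem_biUnion, Finset.mem_image]
    exact ⟨j, Finset.mem_univ _, c, by simpa [Fintype.mem_piFinset] using hcS, rfl⟩
  set w := Function.update c j (1:ℂ) with hwdef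
  have hcw : ∀ i, ‖v d i / v d j - w i‖ ≤ ε := by
    intro i
    by_cases hij : i = j
    · subst hij; simp [hwdef, hv, hεpos.le]
    · simp only [hwdef, Function.update_of_ne hij]; exact (hc i).le
  have hdiff : ‖∑ i, a i * (v d i / v d j) - ∑ i, a i * w i‖ ≤ A * ε := by
    rw [← Finset.sum_sub_distrib]
    calc ‖∑ i, (a i * (v d i / v d j) - a i * w i)‖ ≤ ∑ i, ‖a i * (v d i / v d j) - a i * w i‖ :=
          norm_sum_le _ _
      _ ≤ ∑ i, ‖a i‖ * ε := by
          refine Finset.sum_le_sum fun i _ => ?_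
          rw [← mul_sub, norm_mul]
          exact mul_le_mul_of_nonneg_left (hcw i) (norm_nonneg _)
      _ ≤ A * ε := by
          rw [← Finset.sum_mul]
          exact mul_le_mul_of_nonneg_right (by linarith) hεpos.le
  have hAε : C0 * (A * ε) = 1 / 2 := by rw [hε]; field_simp
  have h3 := hC0' w hw
  have h4 : ‖∑ i, a i * w i‖ ≤ ‖∑ i, a i * (v d i / v d j)‖ + A * ε := by
    have := norm_sub_norm_le (∑ i, a i * w i) (∑ i, a i * (v d i / v d j))
    rw [norm_sub_rev] at this
    linarith
  have h5 : 1 / 2 ≤ C0 * ‖∑ i, a i * (v d i / v d j)‖ := by nlinarith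
  have h6 : ∑ i, a i * (v d i / v d j) = (∑ i, a i * v d i) / v d j := by
    rw [Finset.sum_div]; exact Finset.sum_congr rfl fun i _ => by ring
  rw [h6, norm_div] at h5
  have h7 : C0 * (‖∑ i, a i * v d i‖ / ‖v d j‖) * ‖v d j‖ = C0 * ‖∑ i, a i * v d i‖ := by
    field_simp
  nlinarith

theorem exists_form {n : ℕ} (L : Finset (Fin n → ℂ)) (hL : ∀ w ∈ L, w ≠ 0) :
    ∃ a : Fin n → ℂ, ∀ w ∈ L, ∑ i, a i * w i ≠ 0 := by
  obtain ⟨f, hf⟩ := Module.exists_dual_forall_apply_ne_zero (K := ℂ) (fun w : L => (w : Fin n → ℂ))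
    (fun w => hL w w.2)
  refine ⟨fun i => f (Pi.single i 1), fun w hw => ?_⟩
  have := hf ⟨w, hw⟩
  intro h0
  apply this
  rw [LinearMap.pi_apply_eq_sum_univ f]
  refine Eq.trans ?_ h0
  refine Finset.sum_congr rfl fun i _ => ?_
  rw [smul_eq_mul, mul_comm]
  congr 2
  ext j
  simp [Pi.single_apply, eq_comm]

theorem poly_bound (d : Polynomial ℂ) (hd : d ≠ 0) :
    ∃ R : ℝ, 0 < R ∧ ∀ t : ℂ, R < ‖t‖ → d.eval t ≠ 0 := by
  classical
  refine ⟨∑ c ∈ d.roots.toFinset, ‖c‖ + 1, by positivity, fun t ht h0 => ?_⟩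
  have hm : t ∈ d.roots.toFinset := by simp [hd, h0]
  have := Finset.single_le_sum (f := fun c : ℂ => ‖c‖) (fun c _ => norm_nonneg c) hm
  linarith

theorem irr_simple (Q : Polynomial (Polynomial ℂ)) (hQ : Irreducible Q) :
    ∃ R : ℝ, 0 < R ∧ ∀ t u : ℂ, R < ‖t‖ → Q.evalEval t u = 0 →
      (Polynomial.derivative Q).evalEval t u ≠ 0 := by
  by_cases hdeg : Q.natDegree = 0
  · obtain ⟨q, rfl⟩ : ∃ q, Q = Polynomial.C q := ⟨_, Polynomial.eq_C_of_natDegree_eq_zero hdeg⟩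
    have hq : q ≠ 0 := by rintro rfl; simp at hQ
    obtain ⟨R, hR, h⟩ := poly_bound q hq
    refine ⟨R, hR, fun t u ht h0 => ?_⟩
    rw [Polynomial.evalEval_C] at h0
    exact absurd h0 (h t ht)
  · have hprim := hQ.isPrimitive hdeg
    let K := FractionRing (Polynomial ℂ)
    have hK : Irreducible (Q.map (algebraMap (Polynomial ℂ) K)) :=
      (hprim.irreducible_iff_irreducible_map_fraction_map).mp hQ
    have hsep : (Q.map (algebraMap (Polynomial ℂ) K)).Separable := hK.separable
    obtain ⟨a, b, hab⟩ := hsep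
    obtain ⟨da, hda, ha⟩ := IsLocalization.integerNormalization_spec
      (nonZeroDivisors (Polynomial ℂ)) a
    obtain ⟨db, hdb, hb⟩ := IsLocalization.integerNormalization_spec
      (nonZeroDivisors (Polynomial ℂ)) b
    set a' := IsLocalization.integerNormalization (nonZeroDivisors (Polynomial ℂ)) a
    set b' := IsLocalization.integerNormalization (nonZeroDivisors (Polynomial ℂ)) b
    have hid : Polynomial.C db * a' * Q + Polynomial.C da * b' * Polynomial.derivative Q
        = Polynomial.C (da * db) := by
      apply Polynomial.map_injective (algebraMap (Polynomial ℂ) K) (IsFractionRing.injective _ _)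
      simp only [Polynomial.map_add, Polynomial.map_mul, Polynomial.map_C, ha, hb,
        ← Polynomial.derivative_map, Algebra.smul_def, map_mul, Polynomial.algebraMap_apply]
      linear_combination (Polynomial.C (algebraMap (Polynomial ℂ) K da) *
        Polynomial.C (algebraMap (Polynomial ℂ) K db)) * hab
    obtain ⟨R, hR, h⟩ := poly_bound (da * db)
      (mul_ne_zero (nonZeroDivisors.ne_zero hda) (nonZeroDivisors.ne_zero hdb))
    refine ⟨R, hR, fun t u ht h0 h1 => h t ht ?_⟩
    have := congrArg (Polynomial.evalEval t u) hid
    rw [Polynomial.evalEval_add, Polynomial.evalEval_mul, Polynomial.evalEval_mul _ _ _ Q.derivative,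
      h0, h1, Polynomial.evalEval_C] at this
    simpa using this.symm

theorem dich (Q : Polynomial (Polynomial ℂ)) (hQ : Q ≠ 0) (M0 : ℝ) :
    ∃ M R : ℝ, M0 ≤ M ∧ 0 < M ∧ 0 < R ∧ ∀ t u : ℂ, R < ‖t‖ → Q.evalEval t u = 0 →
      ‖u‖ ≤ 2 * M * ‖t‖ → ‖u‖ < M * ‖t‖ := by
  let ι := {p : ℂ × ℂ // Q.evalEval p.1 p.2 = 0 ∧ p.1 ≠ 0}
  have h1 : AlgOn (fun p : ι => p.1.1) (fun p : ι => p.1.2 / p.1.1) :=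
    AlgOn.div ⟨Q, hQ, fun p => p.2.1⟩ (AlgOn.self _) fun p => p.2.2
  obtain ⟨P, hP, hP'⟩ := h1
  obtain ⟨S, hS⟩ := limits_finite P hP
  set M := |M0| + ∑ c ∈ S, ‖c‖ + 1 with hM
  have hs : 0 ≤ ∑ c ∈ S, ‖c‖ := Finset.sum_nonneg fun c _ => norm_nonneg c
  obtain ⟨R, hR, h⟩ := hS (2 * M) 1 one_pos
  refine ⟨M, R, ?_, by positivity, hR, fun t u ht hQ0 hu => ?_⟩
  · have := le_abs_self M0; linarith
  have ht0 : 0 < ‖t‖ := hR.trans ht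
  obtain ⟨c, hc, hc'⟩ := h t (u / t) ht (by rw [norm_div]; exact (div_le_iff₀ ht0).mpr hu)
    (hP' ⟨(t, u), hQ0, norm_pos_iff.mp ht0⟩)
  have h2 := Finset.single_le_sum (f := fun c : ℂ => ‖c‖) (fun c _ => norm_nonneg c) hc
  have h3 := norm_sub_norm_le (u / t) c
  have h4 : ‖u / t‖ < M := by have := abs_nonneg M0; linarith
  rw [norm_div, div_lt_iff₀ ht0] at h4
  exact h4

theorem contDiff_evalEval (Q : Polynomial (Polynomial ℂ)) :
    ContDiff ℂ 1 (fun p : ℂ × ℂ => Q.evalEval p.1 p.2) := by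
  induction Q using Polynomial.induction_on' with
  | add p q hp hq =>
    simp only [Polynomial.evalEval_add]
    exact hp.add hq
  | monomial n a =>
    have : (fun p : ℂ × ℂ => ((Polynomial.monomial n) a).evalEval p.1 p.2)
        = fun p => a.eval p.1 * p.2 ^ n := by
      funext p
      simp [← Polynomial.C_mul_X_pow_eq_monomial, Polynomial.evalEval]
    rw [this]
    exact ((by simpa using Polynomial.contDiff_aeval (𝕜 := ℂ) a 1 : ContDiff ℂ 1 (fun x => a.eval x)).comp contDiff_fst).mul (contDiff_snd.pow n)

theorem implicit (Q : Polynomial (Polynomial ℂ)) (s0 u0 : ℂ) (h0 : Q.evalEval s0 u0 = 0)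
    (h1 : (Polynomial.derivative Q).evalEval s0 u0 ≠ 0) :
    ∃ φ : OpenPartialHomeomorph (ℂ × ℂ) (ℂ × ℂ), (s0, u0) ∈ φ.source ∧
      (∀ p, φ p = (p.1, Q.evalEval p.1 p.2)) ∧ DifferentiableAt ℂ φ.symm (s0, 0) := by
  have hF := (contDiff_evalEval Q).contDiffAt.hasStrictFDerivAt (x := (s0, u0)) one_ne_zero
  set F' := fderiv ℂ (fun p : ℂ × ℂ => Q.evalEval p.1 p.2) (s0, u0) with hF'
  have h2 : F' (0, 1) = (Polynomial.derivative Q).evalEval s0 u0 := by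
    have e1 : HasDerivAt (fun u : ℂ => Q.evalEval s0 u) (F' (0, 1)) u0 :=
      hF.hasFDerivAt.comp_hasDerivAt (f := fun u : ℂ => ((s0, u) : ℂ × ℂ)) u0
        ((hasDerivAt_const u0 s0).prodMk (hasDerivAt_id u0))
    have e2 : HasDerivAt (fun u : ℂ => Q.evalEval s0 u)
        ((Polynomial.derivative Q).evalEval s0 u0) u0 := by
      have := (Q.map (Polynomial.evalRingHom s0)).hasDerivAt u0
      rw [Polynomial.derivative_map] at this
      simpa only [Polynomial.map_evalRingHom_eval] using this
    exact e1.unique e2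
  have hne : F' (0, 1) ≠ 0 := h2 ▸ h1
  let e : (ℂ × ℂ) ≃L[ℂ] (ℂ × ℂ) := (ContinuousLinearEquiv.refl ℂ ℂ).skewProd
    (ContinuousLinearEquiv.unitsEquivAut ℂ (Units.mk0 _ hne))
    (F'.comp (ContinuousLinearMap.inl ℂ ℂ ℂ))
  have hΦ : HasStrictFDerivAt (fun p : ℂ × ℂ => (p.1, Q.evalEval p.1 p.2))
      (e : (ℂ × ℂ) →L[ℂ] (ℂ × ℂ)) (s0, u0) := by
    have := (hasStrictFDerivAt_fst (𝕜 := ℂ) (p := (s0, u0))).prodMk hF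
    have he : (e : (ℂ × ℂ) →L[ℂ] (ℂ × ℂ)) = (ContinuousLinearMap.fst ℂ ℂ ℂ).prod F' := by
      ext <;> simp [e, ContinuousLinearEquiv.skewProd_apply]
      exact F'.map_zero
    rw [he]
    exact this
  refine ⟨hΦ.toOpenPartialHomeomorph _, hΦ.mem_toOpenPartialHomeomorph_source,
    fun p => by rw [hΦ.toOpenPartialHomeomorph_coe], ?_⟩
  have : DifferentiableAt ℂ (hΦ.toOpenPartialHomeomorph _).symm (s0, Q.evalEval s0 u0) :=
    hΦ.to_localInverse.hasFDerivAt.differentiableAt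
  rwa [h0] at this

theorem branch (Q : Polynomial (Polynomial ℂ)) (N ρ : ℝ) (t0 u0 : ℂ) (hρ : 0 < ρ)
    (hs : ∀ s u, ‖s - t0‖ ≤ ρ → Q.evalEval s u = 0 → (Polynomial.derivative Q).evalEval s u ≠ 0)
    (hd : ∀ s u, ‖s - t0‖ ≤ ρ → Q.evalEval s u = 0 → ‖u‖ ≤ N → ‖u‖ < N)
    (h0 : Q.evalEval t0 u0 = 0) (hu0 : ‖u0‖ ≤ N) :
    ∃ u : ℂ → ℂ, DifferentiableOn ℂ u (ball t0 ρ) ∧ u t0 = u0 ∧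
      ∀ s ∈ ball t0 ρ, Q.evalEval s (u s) = 0 ∧ ‖u s‖ ≤ N := by
  have hcont : Continuous (fun p : ℂ × ℂ => Q.evalEval p.1 p.2) := (contDiff_evalEval Q).continuous
  let K : Set (ℂ × ℂ) := (closedBall t0 ρ ×ˢ closedBall 0 N) ∩ {p | Q.evalEval p.1 p.2 = 0}
  have hK : IsCompact K := ((isCompact_closedBall _ _).prod (isCompact_closedBall _ _)).inter_right
    (isClosed_eq hcont continuous_const)
  have : CompactSpace K := isCompact_iff_compactSpace.mp hK
  let f : K → ℂ := fun p => p.1.1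
  have hf : Continuous f := continuous_fst.comp continuous_subtype_val
  let U : Set (ℂ × ℂ) := ball t0 ρ ×ˢ ball 0 N
  have hU : IsOpen U := isOpen_ball.prod isOpen_ball
  have hUK : ∀ p ∈ U, Q.evalEval p.1 p.2 = 0 → p ∈ K := fun p hp h =>
    ⟨⟨ball_subset_closedBall hp.1, ball_subset_closedBall hp.2⟩, h⟩
  have hKU : ∀ p ∈ K, p.1 ∈ ball t0 ρ → p ∈ U := fun p hp h =>
    ⟨h, by
      have := hd p.1 p.2 (mem_closedBall_iff_norm.mp hp.1.1) hp.2
        (mem_closedBall_zero_iff.mp hp.1.2)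
      exact mem_ball_zero_iff.mpr this⟩
  have hloc : IsLocalHomeomorphOn f (f ⁻¹' ball t0 ρ) := by
    apply IsLocalHomeomorphOn.mk
    intro e he
    obtain ⟨φ, hφ, hφe, -⟩ := implicit Q e.1.1 e.1.2 e.2.2
      (hs _ _ (mem_closedBall_iff_norm.mp e.2.1.1) e.2.2)
    have key : ∀ s, (s, (0:ℂ)) ∈ φ.target → Q.evalEval (φ.symm (s, 0)).1 (φ.symm (s, 0)).2 = 0
        ∧ (φ.symm (s, 0)).1 = s := by
      intro s hs'
      have h1 := φ.right_inv hs'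
      rw [hφe] at h1
      exact ⟨(Prod.ext_iff.mp h1).2, (Prod.ext_iff.mp h1).1⟩
    classical
    let g : ℂ → K := fun s => if h : φ.symm (s, 0) ∈ K then ⟨φ.symm (s, 0), h⟩ else e
    let T : Set ℂ := {s | (s, (0:ℂ)) ∈ φ.target ∩ φ.symm ⁻¹' U}
    have hg : ∀ s ∈ T, (g s).1 = φ.symm (s, 0) := by
      intro s hs'
      have : φ.symm (s, 0) ∈ K := hUK _ hs'.2 (key s hs'.1).1
      simp [g, this]
    have hmk : Continuous (fun s : ℂ => (s, (0:ℂ))) := by fun_prop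
    refine ⟨{ toFun := f, invFun := g, source := {p | p.1 ∈ φ.source ∩ U}, target := T
              map_source' := ?_, map_target' := ?_, left_inv' := ?_, right_inv' := ?_
              open_source := ?_, open_target := ?_, continuousOn_toFun := hf.continuousOn
              continuousOn_invFun := ?_ }, ?_, fun _ _ => rfl⟩
    · rintro p ⟨hp1, hp2⟩
      have h1 : (f p, (0:ℂ)) = φ p.1 := by rw [hφe, p.2.2]
      refine ⟨?_, ?_⟩
      · rw [h1]; exact φ.map_source hp1
      · show φ.symm (f p, 0) ∈ U
        rw [h1, φ.left_inv hp1]; exact hp2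
    · intro s hs'
      show (g s).1 ∈ φ.source ∩ U
      rw [hg s hs']
      exact ⟨φ.map_target hs'.1, hs'.2⟩
    · rintro p ⟨hp1, hp2⟩
      have h1 : (f p, (0:ℂ)) = φ p.1 := by rw [hφe, p.2.2]
      have h2 : φ.symm (f p, 0) = p.1 := by rw [h1, φ.left_inv hp1]
      have h3 : φ.symm (f p, 0) ∈ K := h2 ▸ p.2
      show g (f p) = p
      simp only [g, h3, dif_pos]
      exact Subtype.ext h2
    · intro s hs'
      show (g s).1.1 = s
      rw [hg s hs']
      exact (key s hs'.1).2
    · rw [Topology.IsInducing.subtypeVal.continuousOn_iff]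
      refine ContinuousOn.congr (f := fun s => φ.symm (s, 0)) ?_ hg
      exact φ.continuousOn_symm.comp hmk.continuousOn fun s hs' => hs'.1
    · exact (φ.open_source.inter hU).preimage continuous_subtype_val
    · exact (φ.isOpen_inter_preimage_symm hU).preimage hmk
    · exact ⟨hφ, hKU _ e.2 he⟩
  have hcov := IsCoveringMapOn.of_isLocalHomeomorphOn hf hloc
  have : ContractibleSpace (ball t0 ρ) :=
    (convex_ball t0 ρ).contractibleSpace ⟨t0, mem_ball_self hρ⟩
  have : LocallyPathConnectedSpace (ball t0 ρ) := isOpen_ball.locallyPathConnectedSpace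
  let ι : C(ball t0 ρ, ℂ) := ⟨Subtype.val, continuous_subtype_val⟩
  have hu0K : (t0, u0) ∈ K := ⟨⟨mem_closedBall_self hρ.le, mem_closedBall_zero_iff.mpr hu0⟩, h0⟩
  obtain ⟨F, ⟨hF0, hF⟩, -⟩ := hcov.existsUnique_continuousMap_lifts ι
    (a₀ := ⟨t0, mem_ball_self hρ⟩) (e₀ := ⟨(t0, u0), hu0K⟩) rfl (fun a => a.2)
  classical
  let u : ℂ → ℂ := fun s => if h : s ∈ ball t0 ρ then (F ⟨s, h⟩).1.2 else 0
  have hu : ∀ s (h : s ∈ ball t0 ρ), (F ⟨s, h⟩).1 = (s, u s) := by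
    intro s h
    refine Prod.ext ?_ ?_
    · exact congrFun hF ⟨s, h⟩
    · simp only [u, dif_pos h]
  have huK : ∀ s ∈ ball t0 ρ, (s, u s) ∈ K := fun s h => hu s h ▸ (F ⟨s, h⟩).2
  have hucont : ContinuousOn u (ball t0 ρ) := by
    rw [continuousOn_iff_continuous_domRestrict]
    have : (ball t0 ρ).domRestrict u = fun s => (F s).1.2 := by
      funext s
      exact (congrArg Prod.snd (hu s.1 s.2)).symm
    rw [this]
    fun_prop
  refine ⟨u, ?_, ?_, fun s h => ⟨(huK s h).2, mem_closedBall_zero_iff.mp (huK s h).1.2⟩⟩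
  · intro s h
    apply DifferentiableAt.differentiableWithinAt
    have hsK := huK s h
    obtain ⟨φ, hφ, hφe, hφd⟩ := implicit Q s (u s) hsK.2
      (hs _ _ (mem_closedBall_iff_norm.mp hsK.1.1) hsK.2)
    have hc : ContinuousAt (fun z => (z, u z)) s :=
      continuousAt_id.prodMk (hucont.continuousAt (isOpen_ball.mem_nhds h))
    have hev : u =ᶠ[nhds s] fun z => (φ.symm (z, 0)).2 := by
      filter_upwards [hc (φ.open_source.mem_nhds hφ), isOpen_ball.mem_nhds h] with z hz1 hz2
      have h1 := φ.left_inv hz1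
      rw [hφe] at h1
      have h2 := (huK z hz2).2
      simp only [Set.mem_ofPred_eq] at h2
      simp only [h2] at h1
      rw [h1]
    refine DifferentiableAt.congr_of_eventuallyEq ?_ hev
    have h3 : DifferentiableAt ℂ (fun z : ℂ => (z, (0:ℂ))) s := by fun_prop
    exact (DifferentiableAt.comp s hφd h3).snd
  · have := hu t0 (mem_ball_self hρ)
    rw [hF0] at this
    exact (congrArg Prod.snd this).symm

def LipS (Q : Polynomial (Polynomial ℂ)) : Prop :=
  ∀ M0 : ℝ, ∃ C R : ℝ, 0 < C ∧ 0 < R ∧ ∀ t0 s u0 : ℂ, R < ‖t0‖ → ‖s - t0‖ < ‖t0‖ / 4 →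
    ‖u0‖ ≤ M0 * ‖t0‖ → Q.evalEval t0 u0 = 0 →
    ∃ u' : ℂ, Q.evalEval s u' = 0 ∧ ‖u' - u0‖ ≤ C * ‖s - t0‖

theorem lipS_irr (Q : Polynomial (Polynomial ℂ)) (hQ : Irreducible Q) : LipS Q := by
  intro M0
  obtain ⟨M, R1, hM0, hM, hR1, hd⟩ := dich Q hQ.ne_zero M0
  obtain ⟨R2, hR2, hs⟩ := irr_simple Q hQ
  refine ⟨12 * M, 2 * (R1 + R2), by positivity, by positivity, fun t0 s u0 ht hst hu h0 => ?_⟩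
  have ht0 : 0 < ‖t0‖ := by linarith
  have hlow : ∀ z, ‖z - t0‖ ≤ ‖t0‖ / 3 → 2 / 3 * ‖t0‖ ≤ ‖z‖ ∧ ‖z‖ ≤ 4 / 3 * ‖t0‖ := by
    intro z hz
    have h1 := norm_sub_norm_le t0 z
    have h2 := norm_sub_norm_le z t0
    rw [norm_sub_rev] at h1
    constructor <;> linarith
  obtain ⟨u, hu1, hu2, hu3⟩ := branch Q (4 / 3 * M * ‖t0‖) (‖t0‖ / 3) t0 u0 (by positivity)
    (fun z w hz hw => hs z w (by have := hlow z hz; linarith) hw)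
    (fun z w hz hw hwN => by
      have h1 := hlow z hz
      have := hd z w (by linarith) hw (by nlinarith)
      nlinarith) h0 (by nlinarith)
  have hsb : s ∈ ball t0 (‖t0‖ / 3) := by rw [mem_ball_iff_norm]; linarith
  refine ⟨u s, (hu3 s hsb).1, ?_⟩
  have hmaps : MapsTo u (ball t0 (‖t0‖ / 3)) (closedBall (u t0) (4 * M * ‖t0‖)) := by
    intro z hz
    rw [mem_closedBall_iff_norm]
    have h1 := (hu3 z hz).2
    have h2 := (hu3 t0 (mem_ball_self (by positivity))).2
    have h3 := norm_sub_le (u z) (u t0)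
    have : 0 < M * ‖t0‖ := by positivity
    nlinarith
  have := Complex.dist_le_div_mul_dist_of_mapsTo_ball hu1 hmaps hsb
  rw [dist_eq_norm, dist_eq_norm, hu2] at this
  convert this using 2
  field_simp
  norm_num

theorem lipS (Q : Polynomial (Polynomial ℂ)) (hQ : Q ≠ 0) : LipS Q := by
  induction Q using WfDvdMonoid.induction_on_irreducible with
  | zero => exact absurd rfl hQ
  | unit v hv =>
    intro M0
    refine ⟨1, 1, one_pos, one_pos, fun t0 s u0 _ _ _ h => ?_⟩
    obtain ⟨w, hw⟩ := hv.exists_right_inv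
    have := congrArg (Polynomial.evalEval t0 u0) hw
    rw [Polynomial.evalEval_mul, h] at this
    simp at this
  | mul a i ha hi ih =>
    intro M0
    obtain ⟨C1, R1, hC1, hR1, h1⟩ := ih ha M0
    obtain ⟨C2, R2, hC2, hR2, h2⟩ := lipS_irr i hi M0
    refine ⟨C1 + C2, R1 + R2, by positivity, by positivity, fun t0 s u0 ht hst hu h => ?_⟩
    rw [Polynomial.evalEval_mul] at h
    have hn := norm_nonneg (s - t0)
    rcases mul_eq_zero.mp h with h | h
    · obtain ⟨u', hu', hu''⟩ := h2 t0 s u0 (by linarith) hst hu h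
      exact ⟨u', by rw [Polynomial.evalEval_mul, hu', zero_mul], by nlinarith⟩
    · obtain ⟨u', hu', hu''⟩ := h1 t0 s u0 (by linarith) hst hu h
      exact ⟨u', by rw [Polynomial.evalEval_mul, hu', mul_zero], by nlinarith⟩

theorem trdeg_aux {A : Type} [CommRing A] [IsDomain A] [Algebra ℂ A] (s : ℕ) (hs : s ≤ 1)
    (g : MvPolynomial (Fin s) ℂ →ₐ[ℂ] A) (hg : Function.Injective g) (hi : g.IsIntegral)
    (f h : A) : ∃ P : MvPolynomial (Fin 2) ℂ, P ≠ 0 ∧ MvPolynomial.aeval ![f, h] P = 0 := by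
  let : Algebra (MvPolynomial (Fin s) ℂ) A := g.toRingHom.toAlgebra
  have : IsScalarTower ℂ (MvPolynomial (Fin s) ℂ) A :=
    IsScalarTower.of_algebraMap_eq fun x => (g.commutes x).symm
  have : Algebra.IsIntegral (MvPolynomial (Fin s) ℂ) A := ⟨hi⟩
  have : FaithfulSMul (MvPolynomial (Fin s) ℂ) A :=
    (faithfulSMul_iff_algebraMap_injective _ _).mpr hg
  have hb := (IsTranscendenceBasis.mvPolynomial (Fin s) ℂ).algebraMap_comp (A := A)
  have hcard := hb.cardinalMk_eq_trdeg
  by_contra! hcon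
  have hind : AlgebraicIndependent ℂ ![f, h] := by
    rw [algebraicIndependent_iff]
    intro p hp
    by_contra hp0
    exact hcon p hp0 hp
  have h2 := hind.cardinalMk_le_trdeg
  rw [← hcard] at h2
  simp only [Cardinal.mk_fin, Nat.cast_le] at h2
  omega

theorem lift_max {B A : Type} [CommRing B] [CommRing A] (g : B →+* A)
    (hg : Function.Injective g) (hi : g.IsIntegral) (P : Ideal B) [hP : P.IsMaximal] :
    ∃ Q : Ideal A, Q.IsMaximal ∧ Q.comap g = P := by
  let : Algebra B A := g.toAlgebra
  have : Algebra.IsIntegral B A := ⟨hi⟩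
  exact Ideal.exists_ideal_over_maximal_of_isIntegral P (by
    have : RingHom.ker (algebraMap B A) = ⊥ := (RingHom.injective_iff_ker_eq_bot _).mp hg
    rw [this]; exact bot_le)

theorem evalEval_equiv (P : MvPolynomial (Fin 2) ℂ) (a b : ℂ) :
    ((Polynomial.Bivariate.equivMvPolynomial ℂ).symm P).evalEval a b
      = MvPolynomial.eval ![a, b] P := by
  induction P using MvPolynomial.induction_on with
  | C c => simp
  | add p q hp hq => simp [hp, hq]
  | mul_X p i hp =>
    rw [map_mul, Polynomial.evalEval_mul, hp]
    fin_cases i <;> simp [Polynomial.evalEval_C]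

theorem ad_aux (n : ℕ) (Z : Set (Fin n → ℂ)) (S : Finset (MvPolynomial (Fin n) ℂ))
    (hZ : Z = {z | ∀ p ∈ S, MvPolynomial.eval z p = 0}) (hinf : Z.Infinite)
    (hp : ∀ p, (∃ z ∈ Z, MvPolynomial.eval z p ≠ 0) →
      {z | z ∈ Z ∧ MvPolynomial.eval z p = 0}.Finite)
    (f h : MvPolynomial (Fin n) ℂ) :
    ∃ Q : Polynomial (Polynomial ℂ), Q ≠ 0 ∧
      ∀ z ∈ Z, Q.evalEval (MvPolynomial.eval z f) (MvPolynomial.eval z h) = 0 := by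
  let I : Ideal (MvPolynomial (Fin n) ℂ) := MvPolynomial.vanishingIdeal ℂ Z
  have memI : ∀ p, p ∈ I ↔ ∀ z ∈ Z, MvPolynomial.eval z p = 0 := fun p => by
    simp only [I, MvPolynomial.mem_vanishingIdeal_iff, MvPolynomial.aeval_eq_eval]
  have hItop : I ≠ ⊤ := by
    intro h1
    obtain ⟨z, hz⟩ := hinf.nonempty
    have := (memI 1).mp (h1 ▸ Submodule.mem_top) z hz
    simp at this
  have hprime : I.IsPrime := by
    refine ⟨hItop, fun {p q} hpq => ?_⟩
    by_contra! hcon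
    simp only [memI, not_forall] at hcon
    obtain ⟨⟨z1, hz1, h1⟩, ⟨z2, hz2, h2⟩⟩ := hcon
    refine hinf (((hp p ⟨z1, hz1, h1⟩).union (hp q ⟨z2, hz2, h2⟩)).subset fun z hz => ?_)
    have := (memI _).mp hpq z hz
    rw [map_mul] at this
    rcases mul_eq_zero.mp this with h | h
    · exact Or.inl ⟨hz, h⟩
    · exact Or.inr ⟨hz, h⟩
  obtain ⟨s, -, g, hg, hi⟩ := exists_integral_inj_algHom_of_quotient I hItop
  have hs : s ≤ 1 := by
    by_contra! hs
    let i0 : Fin s := ⟨0, by omega⟩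
    let i1 : Fin s := ⟨1, by omega⟩
    obtain ⟨F0, hF0⟩ := Ideal.Quotient.mk_surjective (g (MvPolynomial.X i0))
    obtain ⟨F1, hF1⟩ := Ideal.Quotient.mk_surjective (g (MvPolynomial.X i1))
    have hpt : ∀ c : ℂ, ∃ z ∈ Z, MvPolynomial.eval z F0 = 0 ∧ MvPolynomial.eval z F1 = c := by
      intro c
      let y : Fin s → ℂ := fun i => if i = i1 then c else 0
      obtain ⟨q, hq, hq'⟩ := lift_max g.toRingHom hg hi (MvPolynomial.vanishingIdeal ℂ {y})
      have hmax : (q.comap (Ideal.Quotient.mk I)).IsMaximal :=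
        Ideal.comap_isMaximal_of_surjective _ Ideal.Quotient.mk_surjective
      obtain ⟨z, hz⟩ := MvPolynomial.isMaximal_iff_eq_vanishingIdeal_singleton.mp hmax
      have hmem : ∀ p, Ideal.Quotient.mk I p ∈ q ↔ MvPolynomial.eval z p = 0 := by
        intro p
        rw [← Ideal.mem_comap, hz]
        simp [MvPolynomial.aeval_eq_eval]
      refine ⟨z, ?_, ?_, ?_⟩
      · rw [hZ]
        intro p hpS
        rw [← hmem]
        have : p ∈ I := by
          rw [memI]
          intro w hw
          rw [hZ] at hw
          exact hw p hpS
        rw [Ideal.Quotient.eq_zero_iff_mem.mpr this]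
        exact q.zero_mem
      · rw [← hmem, hF0]
        have : (MvPolynomial.X i0 : MvPolynomial (Fin s) ℂ) ∈ q.comap g.toRingHom := by
          rw [hq']
          simp [y, i0, i1]
        exact this
      · have : (MvPolynomial.X i1 - MvPolynomial.C c : MvPolynomial (Fin s) ℂ)
            ∈ q.comap g.toRingHom := by
          rw [hq']
          simp [y]
        have h2 : Ideal.Quotient.mk I (F1 - MvPolynomial.C c) ∈ q := by
          rw [map_sub, hF1]
          have e : g (MvPolynomial.X i1 - MvPolynomial.C c) ∈ q := this
          rw [map_sub] at e
          convert e using 2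
          exact (g.commutes c).symm
        rw [hmem] at h2
        simpa [sub_eq_zero] using h2
    have hne : ∃ z ∈ Z, MvPolynomial.eval z F0 ≠ 0 := by
      by_contra! hcon
      have h0 : Ideal.Quotient.mk I F0 = 0 := Ideal.Quotient.eq_zero_iff_mem.mpr ((memI _).mpr hcon)
      rw [hF0] at h0
      exact MvPolynomial.X_ne_zero i0 (hg (h0.trans (map_zero g).symm))
    choose z hz1 hz2 hz3 using hpt
    have hinj : Function.Injective z := fun a b hab => by rw [← hz3 a, ← hz3 b, hab]
    exact Set.infinite_range_of_injective hinj ((hp F0 hne).subset (by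
      rintro _ ⟨c, rfl⟩
      exact ⟨hz1 c, hz2 c⟩))
  obtain ⟨P, hP, hP0⟩ := trdeg_aux s hs g hg hi (Ideal.Quotient.mk I f) (Ideal.Quotient.mk I h)
  refine ⟨(Polynomial.Bivariate.equivMvPolynomial ℂ).symm P, by simpa using hP, fun z hz => ?_⟩
  rw [evalEval_equiv]
  have h1 : Ideal.Quotient.mk I (MvPolynomial.aeval ![f, h] P) = 0 := by
    rw [← hP0]
    have : ![Ideal.Quotient.mk I f, Ideal.Quotient.mk I h]
        = fun i => Ideal.Quotient.mkₐ ℂ I (![f, h] i) := by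
      funext i; fin_cases i <;> rfl
    rw [this, ← MvPolynomial.comp_aeval_apply]
    rfl
  have h2 := (memI _).mp (Ideal.Quotient.eq_zero_iff_mem.mp h1) z hz
  rw [← h2, ← MvPolynomial.aeval_eq_eval, ← MvPolynomial.aeval_eq_eval,
    MvPolynomial.comp_aeval_apply]
  congr 2
  funext i
  fin_cases i <;> simp [MvPolynomial.aeval_eq_eval]

theorem ad_irr {n : ℕ} {X : Set (EuclideanSpace ℂ (Fin n))} (hX : IsIrreducibleAlgebraicCurve X)
    (f h : MvPolynomial (Fin n) ℂ) :
    ∃ Q : Polynomial (Polynomial ℂ), Q ≠ 0 ∧ ∀ x ∈ X,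
      Q.evalEval (MvPolynomial.eval (fun i => x i) f) (MvPolynomial.eval (fun i => x i) h) = 0 := by
  classical
  obtain ⟨⟨S, hS⟩, hinf, hmin⟩ := hX
  let e : EuclideanSpace ℂ (Fin n) → (Fin n → ℂ) := fun x i => x i
  have he : Function.Injective e := fun x y hxy => by
    ext i; exact congrFun hxy i
  have key := ad_aux n (e '' X) S ?_ (hinf.image he.injOn) ?_ f h
  · obtain ⟨Q, hQ, hQ'⟩ := key
    exact ⟨Q, hQ, fun x hx => hQ' _ ⟨x, hx, rfl⟩⟩
  · ext z
    constructor
    · rintro ⟨x, hx, rfl⟩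
      rw [hS] at hx
      exact hx
    · intro hz
      refine ⟨WithLp.toLp 2 z, ?_, rfl⟩
      rw [hS]
      exact hz
  · rintro p ⟨_, ⟨x, hx, rfl⟩, hxp⟩
    have hfin := hmin {y | y ∈ X ∧ MvPolynomial.eval (fun i => y i) p = 0}
      ⟨insert p S, by
        ext y
        rw [hS]
        simp [and_comm]⟩
      ⟨fun y hy => hy.1, fun hsub => hxp (hsub hx).2⟩
    refine (hfin.image e).subset ?_
    rintro _ ⟨⟨y, hy, rfl⟩, hyp⟩
    exact ⟨y, ⟨hy, hyp⟩, rfl⟩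

theorem ad {n : ℕ} {X : Set (EuclideanSpace ℂ (Fin n))} (hX : IsAlgebraicCurve X)
    (f h : MvPolynomial (Fin n) ℂ) :
    ∃ Q : Polynomial (Polynomial ℂ), Q ≠ 0 ∧ ∀ x ∈ X,
      Q.evalEval (MvPolynomial.eval (fun i => x i) f) (MvPolynomial.eval (fun i => x i) h) = 0 := by
  classical
  obtain ⟨F, hF, rfl⟩ := hX
  choose! Q hQ hQ' using fun C hC => ad_irr (hF C hC) f h
  refine ⟨∏ C ∈ F, Q C, Finset.prod_ne_zero_iff.mpr hQ, fun x hx => ?_⟩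
  simp only [Set.mem_iUnion] at hx
  obtain ⟨C, hC, hx⟩ := hx
  rw [← Finset.mul_prod_erase _ _ hC, Polynomial.evalEval_mul, hQ' C hC x hx, zero_mul]

theorem curve_closed {n : ℕ} {X : Set (EuclideanSpace ℂ (Fin n))} (hX : IsAlgebraicCurve X) :
    IsClosed X := by
  obtain ⟨F, hF, rfl⟩ := hX
  refine F.finite_toSet.isClosed_biUnion fun C hC => ?_
  obtain ⟨⟨S, hS⟩, -, -⟩ := hF C hC
  rw [hS]
  have : {x : EuclideanSpace ℂ (Fin n) | ∀ p ∈ S, MvPolynomial.eval (fun i => x i) p = 0}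
      = ⋂ p ∈ S, {x | MvPolynomial.eval (fun i => x i) p = 0} := by
    ext x; simp
  rw [this]
  refine isClosed_biInter fun p _ => isClosed_eq ?_ continuous_const
  exact (MvPolynomial.continuous_eval p).comp (by fun_prop)

theorem norm_le_of_coord {n : ℕ} (x : EuclideanSpace ℂ (Fin n)) (B : ℝ) (hB : 0 ≤ B)
    (h : ∀ i, ‖x i‖ ≤ B) : ‖x‖ ≤ n * B := by
  rw [EuclideanSpace.norm_eq]
  refine Real.sqrt_le_iff.mpr ⟨by positivity, ?_⟩
  calc ∑ i, ‖x i‖ ^ 2 ≤ ∑ _i : Fin n, B ^ 2 :=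
        Finset.sum_le_sum fun i _ => pow_le_pow_left₀ (norm_nonneg _) (h i) 2
    _ = n * B ^ 2 := by simp
    _ ≤ (n * B) ^ 2 := by
        have : (n : ℝ) ≤ (n : ℝ) ^ 2 := by exact_mod_cast Nat.le_self_pow two_ne_zero n
        rw [mul_pow]
        exact mul_le_mul_of_nonneg_right this (sq_nonneg B)

theorem step1 {n : ℕ} (hn : 0 < n) {X : Set (EuclideanSpace ℂ (Fin n))}
    (hX : IsAlgebraicCurve X) :
    ∃ a : Fin n → ℂ, (∃ i, a i ≠ 0) ∧ ∃ A : ℝ, 0 < A ∧ ∀ x ∈ X, ∀ i,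
      ‖x i‖ ≤ A * (1 + ‖∑ k, a k * x k‖) := by
  classical
  obtain ⟨L, hL, hL'⟩ := dirs (D := X) (fun d i => d.1 i) (fun j d => d.1 j) (by
    intro i j
    refine AlgOn.div ?_ (AlgOn.self _) fun d => d.2
    obtain ⟨Q, hQ, hQ'⟩ := ad hX (MvPolynomial.X j) (MvPolynomial.X i)
    exact ⟨Q, hQ, fun d => by simpa using hQ' d.1.1 d.1.2⟩)
  let w : Fin n → ℂ := fun _ => 1
  obtain ⟨a, ha⟩ := exists_form (insert w L) (by
    intro v hv
    rcases Finset.mem_insert.mp hv with rfl | hv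
    · exact fun h => one_ne_zero (congrFun h ⟨0, hn⟩)
    · exact hL v hv)
  obtain ⟨C, R, hC, hR, h⟩ := hL' a fun v hv => ha v (Finset.mem_insert_of_mem hv)
  refine ⟨a, ?_, R + C, by positivity, fun x hx i => ?_⟩
  · by_contra! h0
    exact ha w (Finset.mem_insert_self _ _) (by simp [h0])
  · have : Nonempty (Fin n) := ⟨⟨0, hn⟩⟩
    obtain ⟨j, hj⟩ := Finite.exists_max fun k => ‖x k‖
    have h1 := hj i
    have h2 := norm_nonneg (∑ k, a k * x k)
    by_cases hjR : R < ‖x j‖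
    · have := h ⟨x, hx⟩ j hj hjR
      simp only at this
      nlinarith
    · push Not at hjR
      simp only at h1
      nlinarith

theorem step2 {n : ℕ} (hn : 0 < n) (P : Fin n → Polynomial (Polynomial ℂ)) (hP : ∀ i, P i ≠ 0)
    (w : Fin n → ℂ) (hw : w ≠ 0) :
    ∃ b : Fin n → ℂ, ∑ i, b i * w i ≠ 0 ∧ ∃ C R : ℝ, 0 < C ∧ 0 < R ∧ ∀ s (x y : Fin n → ℂ),
      R < ‖s‖ → (∀ i, (P i).evalEval s (x i) = 0) → (∀ i, (P i).evalEval s (y i) = 0) →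
      ∀ i, ‖x i - y i‖ ≤ C * ‖∑ k, b k * (x k - y k)‖ := by
  classical
  let D := {d : ℂ × (Fin n → ℂ) × (Fin n → ℂ) //
    ∀ i, (P i).evalEval d.1 (d.2.1 i) = 0 ∧ (P i).evalEval d.1 (d.2.2 i) = 0}
  obtain ⟨L, hL, hL'⟩ := dirs (D := D) (fun d i => d.1.2.1 i - d.1.2.2 i) (fun _ d => d.1.1) (by
    intro i j
    have h1 : ∀ k, AlgOn (fun d : D => d.1.1) (fun d => d.1.2.1 k - d.1.2.2 k) := fun k =>
      AlgOn.sub ⟨P k, hP k, fun d => (d.2 k).1⟩ ⟨P k, hP k, fun d => (d.2 k).2⟩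
    exact AlgOn.div ((h1 i).comp Subtype.val) ((h1 j).comp Subtype.val) fun d => d.2)
  obtain ⟨b, hb⟩ := exists_form (insert w L) (by
    intro v hv
    rcases Finset.mem_insert.mp hv with rfl | hv
    · exact hw
    · exact hL v hv)
  obtain ⟨C, R, hC, hR, h⟩ := hL' b fun v hv => hb v (Finset.mem_insert_of_mem hv)
  refine ⟨b, hb w (Finset.mem_insert_self _ _), C, R, hC, hR, fun s x y hs hx hy i => ?_⟩
  have : Nonempty (Fin n) := ⟨⟨0, hn⟩⟩
  obtain ⟨j, hj⟩ := Finite.exists_max fun k => ‖x k - y k‖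
  exact (hj i).trans (h ⟨(s, x, y), fun i => ⟨hx i, hy i⟩⟩ j hj hs)

def planeMap {n : ℕ} (a b : Fin n → ℂ) :
    EuclideanSpace ℂ (Fin n) →ₗ[ℂ] EuclideanSpace ℂ (Fin 2) where
  toFun x := !₂[∑ k, a k * x k, ∑ k, b k * x k]
  map_add' x y := by
    ext i
    fin_cases i <;> simp [mul_add, Finset.sum_add_distrib]
  map_smul' c x := by
    ext i
    fin_cases i <;> simp [Finset.mul_sum, mul_left_comm]

theorem planeMap_zero {n : ℕ} (a b : Fin n → ℂ) (x : EuclideanSpace ℂ (Fin n)) :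
    planeMap a b x 0 = ∑ k, a k * x k := rfl

theorem planeMap_one {n : ℕ} (a b : Fin n → ℂ) (x : EuclideanSpace ℂ (Fin n)) :
    planeMap a b x 1 = ∑ k, b k * x k := rfl

theorem planeMap_surj {n : ℕ} (a b w z : Fin n → ℂ) (hz : ∑ k, a k * z k ≠ 0)
    (haw : ∑ k, a k * w k = 0) (hbw : ∑ k, b k * w k ≠ 0) :
    Function.Surjective (planeMap a b) := by
  intro q
  let zz : EuclideanSpace ℂ (Fin n) := WithLp.toLp 2 z
  let ww : EuclideanSpace ℂ (Fin n) := WithLp.toLp 2 w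
  have e1 : planeMap a b zz 0 = ∑ k, a k * z k := rfl
  have e2 : planeMap a b ww 0 = 0 := haw
  have e3 : planeMap a b ww 1 = ∑ k, b k * w k := rfl
  let α := q 0 / ∑ k, a k * z k
  refine ⟨α • zz + ((q 1 - α * planeMap a b zz 1) / ∑ k, b k * w k) • ww, ?_⟩
  ext i
  rw [map_add, map_smul, map_smul]
  fin_cases i
  · simp [e1, e2, α, hz]
  · simp [e3, hbw]

theorem step3 {n : ℕ} (hn : 0 < n) {X : Set (EuclideanSpace ℂ (Fin n))}
    (hX : IsAlgebraicCurve X) (a : Fin n → ℂ) (A : ℝ) (hA : 0 < A)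
    (h1 : ∀ x ∈ X, ∀ i, ‖x i‖ ≤ A * (1 + ‖∑ k, a k * x k‖)) (w : Fin n → ℂ) (hw : w ≠ 0) :
    ∃ b : Fin n → ℂ, ∑ i, b i * w i ≠ 0 ∧ ∃ C T : ℝ, 0 < C ∧ 0 < T ∧ ∀ x ∈ X, ∀ y ∈ X,
      T < ‖∑ k, a k * x k‖ → T < ‖∑ k, a k * y k‖ → ∀ i, ‖x i - y i‖ ≤
        C * (‖∑ k, a k * x k - ∑ k, a k * y k‖ + ‖∑ k, b k * x k - ∑ k, b k * y k‖) := by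
  choose P hP hP' using fun i => ad hX (∑ k, MvPolynomial.C (a k) * MvPolynomial.X k)
    (MvPolynomial.X i)
  simp only [map_sum, map_mul, MvPolynomial.eval_C, MvPolynomial.eval_X] at hP'
  obtain ⟨b, hb, C2, R2, hC2, hR2, h2⟩ := step2 hn P hP w hw
  choose C3 R3 hC3 hR3 h3 using fun i => lipS (P i) (hP i) (2 * A)
  have hC3s : ∀ i, C3 i ≤ ∑ k, C3 k := fun i =>
    Finset.single_le_sum (fun k _ => (hC3 k).le) (Finset.mem_univ i)
  have hR3s : ∀ i, R3 i ≤ ∑ k, R3 k := fun i =>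
    Finset.single_le_sum (fun k _ => (hR3 k).le) (Finset.mem_univ i)
  have hC30 : 0 ≤ ∑ k, C3 k := Finset.sum_nonneg fun k _ => (hC3 k).le
  have hR30 : 0 ≤ ∑ k, R3 k := Finset.sum_nonneg fun k _ => (hR3 k).le
  have hB0 : 0 ≤ ∑ k, ‖b k‖ := Finset.sum_nonneg fun k _ => norm_nonneg _
  set C' := ∑ k, C3 k
  set R' := ∑ k, R3 k
  set B := ∑ k, ‖b k‖ with hB
  refine ⟨b, hb, 18 * A + C2 + C2 * (B * C') + C', 1 + R2 + R', by positivity, by positivity,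
    fun x hx y hy hxT hyT i => ?_⟩
  have hPx := fun i => hP' i x hx
  have hPy := fun i => hP' i y hy
  have h1x := h1 x hx
  have h1y := h1 y hy
  set s := ∑ k, a k * x k
  set t := ∑ k, a k * y k
  set l := ‖∑ k, b k * x k - ∑ k, b k * y k‖ with hl
  have hl0 : 0 ≤ l := norm_nonneg _
  have hd0 : 0 ≤ ‖s - t‖ := norm_nonneg _
  by_cases hfar : ‖t‖ / 4 ≤ ‖s - t‖
  · have e1 := h1x i
    have e2 := h1y i
    have e3 := norm_sub_le (x i) (y i)
    have e4 := norm_sub_norm_le s t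
    have e5 : A * (1 + ‖s‖) + A * (1 + ‖t‖) ≤ A * (18 * ‖s - t‖) := by
      rw [← mul_add]
      exact mul_le_mul_of_nonneg_left (by linarith) hA.le
    have e6 : 0 ≤ (18 * A + C2 + C2 * (B * C') + C') * l := by positivity
    have e7 : 0 ≤ (C2 + C2 * (B * C') + C') * ‖s - t‖ := by positivity
    linarith
  · push Not at hfar
    have hlift : ∀ k, ∃ u', (P k).evalEval s u' = 0 ∧ ‖u' - y k‖ ≤ C' * ‖s - t‖ := by
      intro k
      obtain ⟨u', hu1, hu2⟩ := h3 k t s (y k) (by have := hR3s k; linarith) hfar (by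
        have e := h1y k
        have : A * (1 + ‖t‖) ≤ A * (2 * ‖t‖) := mul_le_mul_of_nonneg_left (by linarith) hA.le
        linarith) (hPy k)
      exact ⟨u', hu1, hu2.trans (mul_le_mul_of_nonneg_right (hC3s k) hd0)⟩
    choose y' hy1 hy2 using hlift
    have e1 := h2 s (fun i => x i) y' (by linarith) hPx hy1 i
    have e2 : ∑ k, b k * (x k - y' k) = (∑ k, b k * x k - ∑ k, b k * y k)
        - ∑ k, b k * (y' k - y k) := by
      rw [← Finset.sum_sub_distrib, ← Finset.sum_sub_distrib]
      exact Finset.sum_congr rfl fun k _ => by ring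
    have e3 : ‖∑ k, b k * (y' k - y k)‖ ≤ B * (C' * ‖s - t‖) := by
      refine (norm_sum_le _ _).trans ?_
      rw [hB, Finset.sum_mul]
      refine Finset.sum_le_sum fun k _ => ?_
      rw [norm_mul]
      exact mul_le_mul_of_nonneg_left (hy2 k) (norm_nonneg _)
    have e4 : ‖∑ k, b k * (x k - y' k)‖ ≤ l + B * (C' * ‖s - t‖) := by
      rw [e2]
      exact (norm_sub_le _ _).trans (by rw [← hl]; linarith)
    have e5 : C2 * ‖∑ k, b k * (x k - y' k)‖ ≤ C2 * (l + B * (C' * ‖s - t‖)) :=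
      mul_le_mul_of_nonneg_left e4 hC2.le
    have e6 : ‖x i - y i‖ ≤ ‖x i - y' i‖ + ‖y' i - y i‖ := norm_sub_le_norm_sub_add_norm_sub _ _ _
    have e7 := hy2 i
    have e8 : 0 ≤ (18 * A + C2 * (B * C') + C') * l := by positivity
    have e9 : 0 ≤ (18 * A + C2) * ‖s - t‖ := by positivity
    simp only at e1
    linarith

/-- For `n > 2` and an algebraic curve `X ⊂ ℂⁿ`, there exist `r > 0` and a
surjective linear map `π : ℂⁿ → ℂ²` whose restriction to `X` is proper, and which is a
bi-Lipschitz embedding of `X \ π⁻¹(B(0,r))` into `ℂ² \ B(0,r)`. -/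
theorem stmt_0 (n : ℕ) (hn : 2 < n) (X : Set (EuclideanSpace ℂ (Fin n)))
    (hX : IsAlgebraicCurve X) :
    ∃ (r : ℝ) (π : EuclideanSpace ℂ (Fin n) →ₗ[ℂ] EuclideanSpace ℂ (Fin 2)),
      0 < r ∧ Function.Surjective π ∧
      (∀ K : Set (EuclideanSpace ℂ (Fin 2)), IsCompact K → IsCompact (X ∩ ⇑π ⁻¹' K)) ∧
      Set.MapsTo (⇑π) (X \ ⇑π ⁻¹' Metric.ball 0 r) ((Metric.ball 0 r)ᶜ) ∧
      ∃ C : ℝ, 1 ≤ C ∧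
        ∀ x ∈ X \ ⇑π ⁻¹' Metric.ball 0 r, ∀ y ∈ X \ ⇑π ⁻¹' Metric.ball 0 r,
          C⁻¹ * ‖x - y‖ ≤ ‖π x - π y‖ ∧ ‖π x - π y‖ ≤ C * ‖x - y‖ := by
  classical
  obtain ⟨a, ⟨i0, hi0⟩, A, hA, h1⟩ := step1 (by omega) hX
  obtain ⟨j0, hj0⟩ : ∃ j0 : Fin n, j0 ≠ i0 := by
    have : Nontrivial (Fin n) := Fin.nontrivial_iff_two_le.mpr (by omega)
    exact exists_ne i0
  let w : Fin n → ℂ := Pi.single j0 (a i0) - Pi.single i0 (a j0)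
  have hw : w ≠ 0 := by
    intro h
    have := congrFun h j0
    simp [w, hj0] at this
    exact hi0 this
  have haw : ∑ k, a k * w k = 0 := by
    simp only [w, Pi.sub_apply, mul_sub, Finset.sum_sub_distrib, Pi.single_apply, mul_ite,
      mul_zero, Finset.sum_ite_eq', Finset.mem_univ, if_true]
    ring
  obtain ⟨b, hbw, C, T, hC, hT, h2⟩ := step3 (by omega) hX a A hA h1 w hw
  set π := planeMap a b with hπ
  have hsurj : Function.Surjective π := planeMap_surj a b w (Pi.single i0 1)
    (by simpa [Pi.single_apply] using hi0) haw hbw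
  let πc := LinearMap.toContinuousLinearMap π
  have hπK : ∀ x, ‖π x‖ ≤ ‖πc‖ * ‖x‖ := fun x => πc.le_opNorm x
  have hπcont : Continuous π := πc.continuous
  have hπ0 : ∀ x, ‖∑ k, a k * x k‖ ≤ ‖π x‖ := fun x => PiLp.norm_apply_le (π x) 0
  have hK0 := norm_nonneg πc
  set K := ‖πc‖
  have hxn : ∀ x ∈ X, ‖x‖ ≤ n * (A * (1 + ‖∑ k, a k * x k‖)) := fun x hx =>
    norm_le_of_coord x _ (by positivity) (h1 x hx)
  have hT' : ∀ x ∈ X \ ⇑π ⁻¹' Metric.ball 0 (K * (n * (A * (1 + T))) + 1),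
      T < ‖∑ k, a k * x k‖ := by
    rintro x ⟨hx, hx'⟩
    by_contra! hcon
    apply hx'
    rw [Set.mem_preimage, mem_ball_zero_iff]
    calc ‖π x‖ ≤ K * ‖x‖ := hπK x
      _ ≤ K * (n * (A * (1 + ‖∑ k, a k * x k‖))) := by gcongr; exact hxn x hx
      _ ≤ K * (n * (A * (1 + T))) := by gcongr
      _ < _ := lt_add_one _
  refine ⟨K * (n * (A * (1 + T))) + 1, π, by positivity, hsurj, ?_, fun x hx => hx.2,
    1 + 2 * n * C + K, ?_, ?_⟩
  · intro M hM
    refine Metric.isCompact_of_isClosed_isBounded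
      ((curve_closed hX).inter (hM.isClosed.preimage hπcont)) ?_
    obtain ⟨B, hB⟩ := hM.isBounded.exists_norm_le
    refine (isBounded_iff_forall_norm_le).mpr ⟨n * (A * (1 + B)), ?_⟩
    rintro x ⟨hx, hxM⟩
    refine (hxn x hx).trans ?_
    gcongr
    exact (hπ0 x).trans (hB _ hxM)
  · have : 0 ≤ 2 * n * C := by positivity
    linarith
  · intro x hx y hy
    have hpos : 0 < 1 + 2 * n * C + K := by positivity
    have hnn := norm_nonneg (x - y)
    have hnπ := norm_nonneg (π x - π y)
    have hnC : 0 ≤ 2 * n * C := by positivity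
    constructor
    · rw [inv_mul_le_iff₀ hpos]
      have e1 : ‖∑ k, a k * x k - ∑ k, a k * y k‖ ≤ ‖π x - π y‖ :=
        PiLp.norm_apply_le (π x - π y) 0
      have e2 : ‖∑ k, b k * x k - ∑ k, b k * y k‖ ≤ ‖π x - π y‖ :=
        PiLp.norm_apply_le (π x - π y) 1
      have e3 : ‖x - y‖ ≤ n * (C * (‖π x - π y‖ + ‖π x - π y‖)) := by
        refine norm_le_of_coord _ _ (by positivity) fun i => ?_
        refine (h2 x hx.1 y hy.1 (hT' x hx) (hT' y hy) i).trans ?_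
        gcongr
      nlinarith
    · rw [← map_sub]
      refine (hπK _).trans ?_
      gcongr
      linarith

end
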